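/- arXiv:2309.09228 — 2 statements merged into one kernel-verified Lean document; each statement's English description precedes it below -/
import Mathlib

section
/- Let G be a finite simple graph that is s-connected (for some integer s ≥ 1) and whose independence number satisfies α(G) < s. Then G is Hamiltonian connected: for every pair of distinct vertices u, v of G there is a Hamiltonian path whose endpoints are u and v. -/
/-!
The proof is the Chvátal–Erdős argument. Paths from `u` to `v` are encoded by their lists of
vertices. It suffices that a path `l` missing a vertex `h` can be replaced by a longer one
(`exists_longer`), since the length of a path is bounded by the number of vertices.

Suppose that no `u`–`v` path is longer than `l`. Let `H` be the component of `h` in `G - l`, and let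
`N` be the set of vertices of `l` with a neighbour in `H`. Any two vertices `x, y` of `N` are joined
by a detour through `H` (`exists_detour`).

* Two consecutive vertices of `l` cannot both lie in `N`, since a detour could be inserted between
  them.
* Hence `l` has a vertex outside `N`, and `N` separates it from `h`; so `|N| ≥ s` by `s`-connectivity.
* If distinct `x, y` in `N` have successors `x', y'` on `l`, then `x'` and `y'` are not adjacent: otherwise
  the path going `u … x`, through `H` to `y`, back along `l` to `x'`, and then `y' … v` would be
  longer (`IsPathList.rotate`).

All vertices of `N` except possibly `v` have a successor on `l`. These at least `s - 1` successors
lie outside `N`, so they are not adjacent to `h`, and together with `h` they form an independent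
set of size at least `s`, a contradiction.

Working with the whole component `H` instead of the single vertex `h` makes Menger's theorem
unnecessary.
-/

open SimpleGraph

/-- A graph is `s`-connected if it has at least `s+1` vertices and deleting any set of
fewer than `s` vertices leaves a connected graph. -/
def SConnected {V : Type*} [Fintype V] (G : SimpleGraph V) (s : ℕ) : Prop :=
  s + 1 ≤ Fintype.card V ∧ ∀ A : Set V, A.ncard < s → (G.induce Aᶜ).Connected

/-- `l` is the list of vertices, in order, of a path from `u` to `v` in `G`. -/
structure IsPathList {V : Type*} (G : SimpleGraph V) (u v : V) (l : List V) : Prop where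
  chain : l.IsChain G.Adj
  nodup : l.Nodup
  head : l.head? = some u
  last : l.getLast? = some v

/-- `q` is the list of vertices of a nonempty path outside `l` whose first vertex is adjacent to `x`
and whose last vertex is adjacent to `y`. -/
structure IsDetour {V : Type*} (G : SimpleGraph V) (l : List V) (x y : V) (q : List V) : Prop where
  ne_nil : q ≠ []
  chain : (x :: q ++ [y]).IsChain G.Adj
  nodup : q.Nodup
  disj : ∀ a ∈ q, a ∉ l

/-- The component of `h` in the graph obtained from `G` by deleting the vertices of `l`
(empty when `h` itself lies on `l`). -/
def offComponent {V : Type*} (G : SimpleGraph V) (l : List V) (h : V) : Set V :=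
  {w | ∃ (hh : h ∉ l) (hw : w ∉ l), (G.induce {a | a ∉ l}).Reachable ⟨h, hh⟩ ⟨w, hw⟩}

/-- The vertices of `l` with a neighbour in the component of `h` in `G - l`. -/
def attachments {V : Type*} (G : SimpleGraph V) (l : List V) (h : V) : Set V :=
  {x | x ∈ l ∧ ∃ w ∈ offComponent G l h, G.Adj x w}

lemma exists_detour {V : Type*} {G : SimpleGraph V} {l : List V} {h x y : V}
    (hx : x ∈ attachments G l h) (hy : y ∈ attachments G l h) :
    ∃ q, IsDetour G l x y q := by
  classical
  obtain ⟨-, w₁, ⟨hh, hw₁, r₁⟩, a₁⟩ := hx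
  obtain ⟨-, w₂, ⟨_, hw₂, r₂⟩, a₂⟩ := hy
  obtain ⟨p, hp⟩ := (r₁.symm.trans r₂).exists_isPath
  refine ⟨p.support.map Subtype.val, ?_, ?_, ?_, ?_⟩
  · exact mt List.map_eq_nil_iff.1 p.support_ne_nil
  · have h1 : (p.support.map Subtype.val).IsChain G.Adj :=
      List.isChain_map_of_isChain Subtype.val (fun a b hab => hab) p.isChain_adj_support
    have hhd : (p.support.map Subtype.val).head? = some w₁ := by
      rw [List.head?_map, List.head?_eq_some_head p.support_ne_nil]; simp
    have hlt : (p.support.map Subtype.val).getLast? = some w₂ := by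
      rw [List.getLast?_map, List.getLast?_eq_some_getLast p.support_ne_nil]; simp
    generalize p.support.map Subtype.val = q at *
    rw [List.isChain_append, List.isChain_cons]
    refine ⟨⟨?_, h1⟩, by simp, ?_⟩
    · simpa [hhd] using a₁
    · cases q with
      | nil => simp at hhd
      | cons c q =>
        rw [List.getLast?_cons_cons, hlt]
        simpa using a₂.symm
  · exact hp.support_nodup.map Subtype.val_injective
  · intro a ha
    obtain ⟨b, -, rfl⟩ := List.mem_map.1 ha
    exact b.2

/-- Inserting a detour between two consecutive vertices. -/
lemma IsPathList.insert {V : Type*} {G : SimpleGraph V} {u v x y : V} {a b q : List V}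
    (hl : IsPathList G u v (a ++ x :: y :: b)) (hq : IsDetour G (a ++ x :: y :: b) x y q) :
    IsPathList G u v (a ++ x :: (q ++ y :: b)) := by
  obtain ⟨c, n, h1, h2⟩ := hl
  obtain ⟨-, c', n', d⟩ := hq
  refine ⟨?_, ?_, ?_, ?_⟩
  · have e1 := (List.isChain_split.1 c)
    have e2 : (x :: (q ++ [y])).IsChain G.Adj := by simpa using c'
    refine List.isChain_split.2 ⟨e1.1, ?_⟩
    have := (List.isChain_split (l₁ := x :: q) (l₂ := b) (c := y) (R := G.Adj)).2
      ⟨by simpa using e2, e1.2.of_cons⟩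
    simpa using this
  · have : (a ++ x :: (q ++ y :: b)).Perm (q ++ (a ++ x :: y :: b)) := by
      classical
      rw [List.perm_iff_count]; intro z; simp [List.count_cons]; omega
    rw [this.nodup_iff, List.nodup_append]
    exact ⟨n', n, fun z hz w hw e => d z hz (e ▸ hw)⟩
  · cases a <;> simpa using h1
  · simpa [List.getLast?_append, List.getLast?_cons] using h2

/-- The Chvátal–Erdős rerouting: from `x` through the detour to `y`, back along the path to the
successor `x'` of `x`, then on to the successor `y'` of `y`. -/
lemma IsPathList.rotate {V : Type*} {G : SimpleGraph V} {u v x x' y y' : V} {a c d q : List V}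
    (hl : IsPathList G u v (a ++ x :: x' :: (c ++ y :: y' :: d)))
    (hq : IsDetour G (a ++ x :: x' :: (c ++ y :: y' :: d)) x y q) (hadj : G.Adj x' y') :
    IsPathList G u v (a ++ x :: (q ++ y :: (c.reverse ++ x' :: y' :: d))) := by
  obtain ⟨ch, n, h1, h2⟩ := hl
  obtain ⟨-, c', n', dj⟩ := hq
  refine ⟨?_, ?_, ?_, ?_⟩
  · have e1 := List.isChain_split.1 ch
    have e2 : (x :: q ++ [y]).IsChain G.Adj := c'
    have e3 := (List.isChain_split (l₁ := x' :: c) (c := y)).1 e1.2.of_cons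
    have e4 : (y :: c.reverse ++ [x']).IsChain G.Adj := by
      have : ((x' :: c ++ [y]).reverse).IsChain G.Adj := by
        rw [List.isChain_reverse]
        exact e3.1.imp fun _ _ h => h.symm
      simpa using this
    have e5 : (x' :: y' :: d).IsChain G.Adj := List.isChain_cons_cons.2 ⟨hadj, e3.2.of_cons⟩
    refine List.isChain_split.2 ⟨e1.1, ?_⟩
    have e6 := List.isChain_split.2 ⟨e4, e5⟩
    exact List.isChain_split.2 ⟨e2, e6⟩
  · have : (a ++ x :: (q ++ y :: (c.reverse ++ x' :: y' :: d))).Perm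
        (q ++ (a ++ x :: x' :: (c ++ y :: y' :: d))) := by
      classical
      rw [List.perm_iff_count]; intro z; simp [List.count_cons]; omega
    rw [this.nodup_iff, List.nodup_append]
    exact ⟨n', n, fun z hz w hw e => dj z hz (e ▸ hw)⟩
  · cases a <;> simpa using h1
  · simpa [List.getLast?_append, List.getLast?_cons] using h2

/-- If a vertex `c` of `l` has no neighbour in the component of `h`, then the attachments of that
component separate `c` from `h`, so there are at least `s` of them. -/
lemma le_ncard_attachments {V : Type*} [Fintype V] {G : SimpleGraph V} {s : ℕ}
    (hconn : SConnected G s) {l : List V} {h c : V} (hh : h ∉ l) (hc : c ∈ l)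
    (hcN : c ∉ attachments G l h) : s ≤ (attachments G l h).ncard := by
  by_contra! hlt
  have hhN : h ∉ attachments G l h := fun H => hh H.1
  obtain ⟨p⟩ := (hconn.2 _ hlt).preconnected ⟨h, hhN⟩ ⟨c, hcN⟩
  have key : ∀ (a b : ((attachments G l h)ᶜ : Set V)),
      (G.induce (attachments G l h)ᶜ).Walk a b →
      a.1 ∈ offComponent G l h → b.1 ∈ offComponent G l h := by
    intro a b p
    induction p with
    | nil => exact id
    | @cons a b _ hab _ ih =>
      intro ha
      apply ih
      have hab' : G.Adj a.1 b.1 := hab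
      have hb : b.1 ∉ l := fun hb => b.2 ⟨hb, a.1, ha, hab'.symm⟩
      obtain ⟨hh, ha', r⟩ := ha
      refine ⟨hh, hb, r.trans (SimpleGraph.Adj.reachable ?_)⟩
      exact hab'
  obtain ⟨_, hcl, _⟩ := key _ _ p ⟨hh, hh, .refl _⟩
  exact hcl hc

/-- A path missing a vertex can be replaced by a longer one. -/
lemma exists_longer {V : Type*} [Fintype V] {G : SimpleGraph V} {s : ℕ}
    (hconn : SConnected G s)
    (hα : ∀ S : Finset V, ((S : Set V)).Pairwise (fun a b => ¬ G.Adj a b) → S.card < s)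
    {u v : V} (huv : u ≠ v) {l : List V} (hl : IsPathList G u v l) {h : V} (hh : h ∉ l) :
    ∃ l', IsPathList G u v l' ∧ l.length < l'.length := by
  classical
  by_contra! hmax
  have hsucc : ∀ {a b : List V} {x y : V}, l = a ++ x :: y :: b →
      x ∈ attachments G l h → y ∉ attachments G l h := by
    rintro a b x y rfl hx hy
    obtain ⟨q, hq⟩ := exists_detour hx hy
    have h1 := hmax _ (hl.insert hq)
    have h2 := List.length_pos_iff.2 hq.ne_nil
    simp only [List.length_append, List.length_cons] at h1
    omega
  -- `x` and `y` lie in `N` in this order along the path, and `x', y'` are their successors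
  have aux : ∀ {a c d : List V} {x x' y y' : V}, l = a ++ x :: x' :: (c ++ y :: y' :: d) →
      x ∈ attachments G l h → y ∈ attachments G l h → x' ≠ y' ∧ ¬ G.Adj x' y' := by
    rintro a c d x x' y y' rfl hx hy
    refine ⟨?_, fun hadj => ?_⟩
    · rintro rfl
      have := hl.nodup
      simp [List.nodup_append] at this
    · obtain ⟨q, hq⟩ := exists_detour hx hy
      have h1 := hmax _ (hl.rotate hq hadj)
      have h2 := List.length_pos_iff.2 hq.ne_nil
      simp only [List.length_append, List.length_cons, List.length_reverse] at h1
      omega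
  -- the decompositions of `l` at `x` and at `y` combine into the form above when `x` comes first
  have half : ∀ {a a₂ b b₂ : List V} {x x' y y' : V}, l = a ++ x :: x' :: b →
      l = a₂ ++ y :: y' :: b₂ → x ∈ attachments G l h → y ∈ attachments G l h → x ≠ y →
      (∃ r, a₂ = a ++ r ∧ x :: x' :: b = r ++ y :: y' :: b₂) → x' ≠ y' ∧ ¬ G.Adj x' y' := by
    rintro a a₂ b b₂ x x' y y' e₁ e₂ hx hy hxy ⟨r, -, e⟩
    rcases r with _ | ⟨r₁, _ | ⟨r₂, r⟩⟩
    · simp at e; exact absurd e.1 hxy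
    · simp at e; exact absurd hy (e.2.1 ▸ hsucc e₁ hx)
    · simp only [List.cons_append, List.cons.injEq] at e
      obtain ⟨-, -, rfl⟩ := e
      exact aux e₁ hx hy
  have pair : ∀ {a a₂ b b₂ : List V} {x x' y y' : V}, l = a ++ x :: x' :: b →
      l = a₂ ++ y :: y' :: b₂ → x ∈ attachments G l h → y ∈ attachments G l h → x ≠ y →
      x' ≠ y' ∧ ¬ G.Adj x' y' := by
    intro a a₂ b b₂ x x' y y' e₁ e₂ hx hy hxy
    rcases List.append_eq_append_iff.1 (e₁.symm.trans e₂) with ⟨r, h1, h2⟩ | ⟨r, h1, h2⟩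
    · exact half e₁ e₂ hx hy hxy ⟨r, h1, h2⟩
    · obtain ⟨h3, h4⟩ := half e₂ e₁ hy hx hxy.symm ⟨r, h1, h2⟩
      exact ⟨h3.symm, fun h => h4 h.symm⟩
  have hN : s ≤ (attachments G l h).ncard := by
    have : ∃ c ∈ l, c ∉ attachments G l h := by
      by_contra! hall
      rcases l with _ | ⟨x, _ | ⟨y, b⟩⟩
      · simpa using hl.head
      · have h1 := hl.head
        have h2 := hl.last
        simp at h1 h2
        exact huv (h1.symm.trans h2)
      · exact hsucc (a := []) rfl (hall x (by simp)) (hall y (by simp))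
    obtain ⟨c, hc, hcN⟩ := this
    exact le_ncard_attachments hconn hh hc hcN
  have hex : ∀ x : V, ∃ y, x ∈ attachments G l h → x ≠ v → ∃ a b, l = a ++ x :: y :: b := by
    intro x
    by_cases hx : x ∈ attachments G l h ∧ x ≠ v
    · obtain ⟨a, b, e⟩ := List.append_of_mem hx.1.1
      rcases b with _ | ⟨y, b⟩
      · have := hl.last
        rw [e] at this
        simp at this
        exact absurd this hx.2
      · exact ⟨y, fun _ _ => ⟨a, b, e⟩⟩
    · exact ⟨x, fun h1 h2 => absurd ⟨h1, h2⟩ hx⟩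
  choose f hf using hex
  let M : Finset V := (attachments G l h).toFinset.erase v
  have hM : ∀ x ∈ M, x ∈ attachments G l h ∧ x ≠ v := by
    intro x hx
    simp [M] at hx
    exact ⟨hx.2, hx.1⟩
  have hMcard : s ≤ M.card + 1 := by
    have := Finset.pred_card_le_card_erase (a := v) (s := (attachments G l h).toFinset)
    rw [Set.ncard_eq_toFinset_card'] at hN
    change s ≤ ((attachments G l h).toFinset.erase v).card + 1
    omega
  have hinj : Set.InjOn f M := by
    intro x hx y hy hxy
    by_contra hne
    obtain ⟨hx1, hx2⟩ := hM x hx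
    obtain ⟨hy1, hy2⟩ := hM y hy
    obtain ⟨_, _, e₁⟩ := hf x hx1 hx2
    obtain ⟨_, _, e₂⟩ := hf y hy1 hy2
    exact (pair e₁ e₂ hx1 hy1 hne).1 hxy
  have hfl : ∀ x ∈ M, f x ∈ l ∧ ¬ G.Adj (f x) h := by
    intro x hx
    obtain ⟨hx1, hx2⟩ := hM x hx
    obtain ⟨a, b, e⟩ := hf x hx1 hx2
    have hm : f x ∈ l := e ▸ by simp
    exact ⟨hm, fun hadj => hsucc e hx1 ⟨hm, h, ⟨hh, hh, .refl _⟩, hadj⟩⟩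
  have hnot : h ∉ M.image f := by
    intro H
    obtain ⟨x, hx, rfl⟩ := Finset.mem_image.1 H
    exact hh (hfl x hx).1
  have := hα (insert h (M.image f)) (by
    intro a ha b hb hab
    simp only [Finset.coe_insert, Finset.coe_image, Set.mem_insert_iff, Set.mem_image] at ha hb
    rcases ha with rfl | ⟨x, hx, rfl⟩ <;> rcases hb with rfl | ⟨y, hy, rfl⟩
    · exact absurd rfl hab
    · exact fun H => (hfl y hy).2 H.symm
    · exact (hfl x hx).2
    · obtain ⟨hx1, hx2⟩ := hM x hx
      obtain ⟨hy1, hy2⟩ := hM y hy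
      obtain ⟨_, _, e₁⟩ := hf x hx1 hx2
      obtain ⟨_, _, e₂⟩ := hf y hy1 hy2
      exact (pair e₁ e₂ hx1 hy1 (fun H => hab (congrArg f H))).2)
  rw [Finset.card_insert_of_notMem hnot, Finset.card_image_of_injOn hinj] at this
  omega

lemma IsPathList.exists_walk {V : Type*} {G : SimpleGraph V} {u v : V} {l : List V}
    (hl : IsPathList G u v l) : ∃ p : G.Walk u v, p.support = l := by
  obtain ⟨c, -, h1, h2⟩ := hl
  have hne : l ≠ [] := by rintro rfl; simp at h1
  have e1 : l.head hne = u := by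
    rw [List.head?_eq_some_head hne] at h1; simpa using h1
  have e2 : l.getLast hne = v := by
    rw [List.getLast?_eq_some_getLast hne] at h2; simpa using h2
  exact ⟨(Walk.ofSupport l hne c).copy e1 e2, by simp⟩

/-- If `G` is `s`-connected (`s ≥ 1`) and its independence number satisfies `α(G) < s`,
then `G` is Hamiltonian connected: every pair of distinct vertices is joined by a
Hamiltonian path. -/
theorem statement2 {V : Type*} [Fintype V] [DecidableEq V] (G : SimpleGraph V) (s : ℕ)
    (hs : 1 ≤ s) (hconn : SConnected G s)
    (hα : ∀ S : Finset V, ((S : Set V)).Pairwise (fun a b => ¬ G.Adj a b) → S.card < s) :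
    ∀ u v : V, u ≠ v → ∃ p : G.Walk u v, p.IsHamiltonian := by
  intro u v huv
  by_contra hno
  have hmiss : ∀ l, IsPathList G u v l → ∃ h, h ∉ l := by
    intro l hl
    by_contra! hall
    obtain ⟨p, rfl⟩ := hl.exists_walk
    exact hno ⟨p, (Walk.IsPath.mk' hl.nodup).isHamiltonian_of_mem hall⟩
  have hlong : ∀ k, ∃ l, IsPathList G u v l ∧ k ≤ l.length := by
    intro k
    induction k with
    | zero =>
      -- `G` itself is connected: delete the empty set of vertices
      have hc := hconn.2 ∅ (by rw [Set.ncard_empty]; exact hs)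
      obtain ⟨p⟩ := hc.preconnected ⟨u, by simp⟩ ⟨v, by simp⟩
      have hr : G.Reachable u v := (p.map (Embedding.induce _).toHom).reachable
      obtain ⟨p, hp⟩ := hr.exists_isPath
      refine ⟨p.support, ⟨p.isChain_adj_support, hp.support_nodup, ?_, ?_⟩, by simp⟩
      · rw [List.head?_eq_some_head p.support_ne_nil]; simp
      · rw [List.getLast?_eq_some_getLast p.support_ne_nil]; simp
    | succ k ih =>
      obtain ⟨l, hl, hk⟩ := ih
      obtain ⟨h, hh⟩ := hmiss l hl
      obtain ⟨l', hl', hlt⟩ := exists_longer hconn hα huv hl hh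
      exact ⟨l', hl', by omega⟩
  obtain ⟨l, hl, hk⟩ := hlong (Fintype.card V + 1)
  have := hl.nodup.length_le_card
  omega
end

section
/- Let k > 1 and ℓ > 0 be integers and let G be a finite simple graph with independence number α(G) < k whose vertex connectivity is at least max{kℓ, 10ℓ}. Then G is Hamiltonian-ℓ-linked: G has at least 2ℓ vertices, and for every sequence of 2ℓ distinct vertices s₁, …, s_ℓ, t₁, …, t_ℓ of G there exist ℓ pairwise vertex-disjoint paths P₁, …, P_ℓ such that for each i the endpoints of P_i are s_i and t_i, and every vertex of G lies on one of the paths P₁, …, P_ℓ. -/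
/-!
The proof has two halves: `G` is `ℓ`-linked, and a linkage can be enlarged until it spans `G`.

**Linking.** Put `m = max k 4`, so that `α(G) < m` and `G` is `mℓ`-connected. The pairs are joined one
at a time (`exists_linkage`). Let `a, b` be a pair and `H` the graph without the other terminals and
without the paths already found. If `a` and `b` are at distance less than `m` in `H`, a shortest path
has at most `m` vertices, and deleting it costs at most `m` in connectivity, exactly what one pair may
spend. Otherwise consider the distance layers from `a`. If every layer strictly between `a` and `b`
had two nonadjacent vertices, such pairs taken from every second layer (and the single vertices `a`,
and possibly `b`) would form an independent set of size `m` (`exists_clique_layer`). So some such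
layer is a clique. It separates `a` from `b` in `H`, so with `q` pairs still to be linked it has at
least `mq - 2(q - 1) ≥ 2q` vertices. Menger's theorem (`menger`, by Göring's induction on the number
of arcs) sends the `2q` remaining terminals along disjoint paths into this clique, whose edges then
complete the linkage (`linkage_of_clique`).

**Spanning.** This is the Chvátal–Erdős argument (`exists_extension`). Let `c₀` be a vertex missed by
a linkage, `C` its component in the graph of uncovered vertices, and `N` the set of covered vertices
with a neighbour in `C`. If `|N| < kℓ` then connectivity puts every covered vertex in `N`, so some
two consecutive vertices of a path lie in `N`, and a detour through `C` can be inserted between them.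
Otherwise some path contains `k` vertices of `N`. Their successors on that path (at least `k - 1`)
together with `c₀` are not independent, and either kind of edge yields a path with the same ends that
also visits `C`: a detour between consecutive vertices, or a rerouting along the edge joining two
successors (`IsListPath.insert`, `IsListPath.cross`).
-/

open SimpleGraph

/-! ### Paths as lists -/

/-- `L` is the vertex list of a path from `a` to `b` in the digraph with arc relation `r`. Lists,
unlike walks, carry no endpoints in their type, so they can be cut and joined freely. -/
def IsListPath {V : Type*} (r : V → V → Prop) (L : List V) (a b : V) : Prop :=
  L.IsChain r ∧ L.Nodup ∧ L.head? = some a ∧ L.getLast? = some b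

/-! ### Menger's theorem -/

/-- Every directed walk from `A` to `B` meets `S`; `S` may contain vertices of `A` and `B`. -/
def Separates {V : Type*} (r : V → V → Prop) (A B S : Finset V) : Prop :=
  ∀ (L : List V) (a b : V), L.IsChain r → L.head? = some a → L.getLast? = some b → a ∈ A → b ∈ B →
    ∃ v ∈ L, v ∈ S

/-- There are `n` pairwise vertex-disjoint directed paths from `A` to `B`. Inner vertices of these
paths may also lie in `A` or `B`. -/
def HasDisjointPaths {V : Type*} (r : V → V → Prop) (A B : Finset V) (n : ℕ) : Prop :=
  ∃ F : Fin n → List V, (∀ i, ∃ a ∈ A, ∃ b ∈ B, IsListPath r (F i) a b) ∧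
    ∀ i j, i ≠ j → ∀ v ∈ F i, v ∉ F j

theorem exists_first_mem {V : Type*} (p : V → Prop) (L : List V) (h : ∃ v ∈ L, p v) :
    ∃ L₁ z L₂, L = L₁ ++ z :: L₂ ∧ p z ∧ ∀ u ∈ L₁, ¬ p u := by
  induction L with
  | nil => simp at h
  | cons c L ih =>
    by_cases hc : p c
    · exact ⟨[], c, L, rfl, hc, by simp⟩
    · obtain ⟨L₁, z, L₂, rfl, hz, hL⟩ := ih (by simpa [hc] using h)
      exact ⟨c :: L₁, z, L₂, rfl, hz, by simpa [hc] using hL⟩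

theorem exists_last_mem {V : Type*} (p : V → Prop) (L : List V) (h : ∃ v ∈ L, p v) :
    ∃ L₁ z L₂, L = L₁ ++ z :: L₂ ∧ p z ∧ ∀ u ∈ L₂, ¬ p u := by
  obtain ⟨L₁, z, L₂, h1, hz, hL⟩ := exists_first_mem p L.reverse (by simpa using h)
  refine ⟨L₂.reverse, z, L₁.reverse, ?_, hz, by simpa using hL⟩
  have := congrArg List.reverse h1
  simpa using this

/-- A walk that visits `x` at most at its end does not use the arc from `x` to `y`. -/
theorem isChain_remove_source {V : Type*} {r : V → V → Prop} {x y : V} (L : List V) (z : V)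
    (h : (L ++ [z]).IsChain r) (hx : x ∉ L) :
    (L ++ [z]).IsChain (fun a b => r a b ∧ ¬ (a = x ∧ b = y)) := by
  induction L with
  | nil => simp
  | cons c L ih =>
    simp only [List.cons_append, List.isChain_cons, List.mem_cons, not_or] at h hx ⊢
    exact ⟨fun w hw => ⟨h.1 w hw, fun e => hx.1 e.1.symm⟩, ih h.2 hx.2⟩

/-- A walk that visits `y` at most at its start does not use the arc from `x` to `y`. -/
theorem isChain_remove_target {V : Type*} {r : V → V → Prop} {x y : V} (L : List V) (z : V)
    (h : (z :: L).IsChain r) (hy : y ∉ L) :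
    (z :: L).IsChain (fun a b => r a b ∧ ¬ (a = x ∧ b = y)) := by
  induction L generalizing z with
  | nil => simp
  | cons c L ih =>
    simp only [List.isChain_cons_cons, List.mem_cons, not_or] at h hy ⊢
    exact ⟨⟨h.1, fun e => hy.1 e.2.symm⟩, ih c h.2 hy.2⟩

/-- `n` disjoint paths into a set `T` of size `n` end at distinct vertices, hence at all of `T`, so
they can be indexed by their ends. -/
theorem HasDisjointPaths.index_target {V : Type*} {r : V → V → Prop} {A T : Finset V} {n : ℕ}
    (h : HasDisjointPaths r A T n) (hT : T.card = n) :
    ∃ p : V → List V, (∀ v ∈ T, ∃ a ∈ A, IsListPath r (p v) a v) ∧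
      ∀ v ∈ T, ∀ w ∈ T, v ≠ w → ∀ z ∈ p v, z ∉ p w := by
  classical
  obtain ⟨F, hF, hd⟩ := h
  choose a ha b hb hp using hF
  have hmem : ∀ i, b i ∈ F i := fun i => List.mem_of_getLast? (hp i).2.2.2
  have hinj : Function.Injective b := by
    intro i j hij
    by_contra hne
    exact hd i j hne (b i) (hmem i) (hij ▸ hmem j)
  have himg : Finset.univ.image b = T := by
    apply Finset.eq_of_subset_of_card_le
    · intro v hv
      obtain ⟨i, -, rfl⟩ := Finset.mem_image.1 hv
      exact hb i
    · rw [Finset.card_image_of_injective _ hinj]; simp [hT]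
  have hsur : ∀ v, ∃ L : List V, v ∈ T → ∃ i, L = F i ∧ b i = v := by
    intro v
    by_cases hv : v ∈ T
    · rw [← himg] at hv
      obtain ⟨i, -, hi⟩ := Finset.mem_image.1 hv
      exact ⟨F i, fun _ => ⟨i, rfl, hi⟩⟩
    · exact ⟨[], fun h => absurd h hv⟩
  choose p hpp using hsur
  refine ⟨p, fun v hv => ?_, fun v hv w hw hvw z hz hz' => ?_⟩
  · obtain ⟨i, h1, h2⟩ := hpp v hv
    exact ⟨a i, ha i, by rw [h1, ← h2]; exact hp i⟩
  · obtain ⟨i, h1, h2⟩ := hpp v hv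
    obtain ⟨j, h3, h4⟩ := hpp w hw
    rw [h1] at hz; rw [h3] at hz'
    exact hd i j (fun e => hvw (by rw [← h2, ← h4, e])) z hz hz'

theorem IsListPath.reverse {V : Type*} {r : V → V → Prop} {L : List V} {a b : V}
    (h : IsListPath r L a b) : IsListPath (flip r) L.reverse b a := by
  obtain ⟨h1, h2, h3, h4⟩ := h
  exact ⟨List.isChain_reverse.2 h1, by simpa using h2, by simpa using h4, by simpa using h3⟩

theorem HasDisjointPaths.index_source {V : Type*} {r : V → V → Prop} {A T : Finset V} {n : ℕ}
    (h : HasDisjointPaths r T A n) (hT : T.card = n) :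
    ∃ p : V → List V, (∀ v ∈ T, ∃ a ∈ A, IsListPath r (p v) v a) ∧
      ∀ v ∈ T, ∀ w ∈ T, v ≠ w → ∀ z ∈ p v, z ∉ p w := by
  obtain ⟨F, hF, hd⟩ := h
  have : HasDisjointPaths (flip r) A T n := by
    refine ⟨fun i => (F i).reverse, fun i => ?_, by simpa using hd⟩
    obtain ⟨a, ha, b, hb, hp⟩ := hF i
    exact ⟨b, hb, a, ha, hp.reverse⟩
  obtain ⟨p, hp, hpd⟩ := this.index_target hT
  refine ⟨fun v => (p v).reverse, fun v hv => ?_, by simpa using hpd⟩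
  obtain ⟨a, ha, h⟩ := hp v hv
  exact ⟨a, ha, h.reverse⟩

/-- Menger's theorem for digraphs, set version. If deleting an arc from `x` to `y` leaves a separator
`S` with fewer than `n` vertices, then `S ∪ {x}` and `S ∪ {y}` separate in the original digraph and
have exactly `n` vertices. By induction there are `n` disjoint paths from `A` to `S ∪ {x}` and from
`S ∪ {y}` to `B` avoiding the arc; they meet only in `S`, and are joined there and along the arc.
Working with arcs instead of edges fixes the direction in which the deleted arc is traversed. -/
theorem menger {V : Type*} [Fintype V] [DecidableEq V] (n : ℕ) (N : ℕ) :
    ∀ (r : V → V → Prop) (A B : Finset V), {p : V × V | r p.1 p.2}.ncard = N →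
      (∀ S : Finset V, Separates r A B S → n ≤ S.card) → HasDisjointPaths r A B n := by
  induction N using Nat.strong_induction_on with
  | _ N ih =>
  intro r A B hN h
  by_cases hr : ∃ x y, r x y
  swap
  · push Not at hr
    have hS : Separates r A B (A ∩ B) := by
      intro L a b hc h1 h2 ha hb
      match L, hc, h1, h2 with
      | [], _, h1, _ => simp at h1
      | [c], _, h1, h2 =>
        simp only [List.head?_cons, Option.some.injEq, List.getLast?_singleton] at h1 h2
        subst h1; subst h2
        exact ⟨c, by simp, by simp [ha, hb]⟩
      | c :: d :: L, hc, _, _ =>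
        exact absurd (List.isChain_cons_cons.1 hc).1 (hr c d)
    obtain ⟨T, hT, hTc⟩ := Finset.exists_subset_card_eq (h _ hS)
    let e := (Finset.equivFinOfCardEq hTc).symm
    refine ⟨fun i => [(e i : V)], fun i => ?_, ?_⟩
    · have := hT (e i).2
      rw [Finset.mem_inter] at this
      exact ⟨e i, this.1, e i, this.2, by simp [IsListPath]⟩
    · intro i j hij v hv hv'
      simp only [List.mem_singleton] at hv hv'
      exact hij (e.injective (Subtype.ext (hv ▸ hv')))
  obtain ⟨x, y, hxy⟩ := hr
  set r' : V → V → Prop := fun a b => r a b ∧ ¬ (a = x ∧ b = y) with hr'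
  have hle : ∀ a b, r' a b → r a b := fun a b h => h.1
  have hlt : {p : V × V | r' p.1 p.2}.ncard < N := by
    rw [← hN]
    apply Set.ncard_lt_ncard _ (Set.toFinite _)
    refine ⟨fun p hp => hle _ _ hp, fun hsub => ?_⟩
    have := hsub (show (x, y) ∈ {p : V × V | r p.1 p.2} from hxy)
    exact this.2 ⟨rfl, rfl⟩
  by_cases h' : ∀ S : Finset V, Separates r' A B S → n ≤ S.card
  · obtain ⟨F, hF, hd⟩ := ih _ hlt r' A B rfl h'
    refine ⟨F, fun i => ?_, hd⟩
    obtain ⟨a, ha, b, hb, hp⟩ := hF i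
    exact ⟨a, ha, b, hb, hp.1.imp hle, hp.2⟩
  push Not at h'
  obtain ⟨S, hS, hSn⟩ := h'
  have hsepx : Separates r A B (insert x S) := by
    intro L a b hc h1 h2 ha hb
    by_contra hcon
    push Not at hcon
    have hxL : x ∉ L := fun hx => hcon x hx (by simp)
    have hc' : L.IsChain r' := by
      rcases List.eq_nil_or_concat L with rfl | ⟨M, z, rfl⟩
      · simp
      · simp only [List.concat_eq_append] at *
        exact isChain_remove_source M z hc (fun hx => hxL (by simp [hx]))
    obtain ⟨v, hv, hvS⟩ := hS L a b hc' h1 h2 ha hb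
    exact hcon v hv (by simp [hvS])
  have hsepy : Separates r A B (insert y S) := by
    intro L a b hc h1 h2 ha hb
    by_contra hcon
    push Not at hcon
    have hyL : y ∉ L := fun hx => hcon y hx (by simp)
    have hc' : L.IsChain r' := by
      match L, hc, hyL with
      | [], _, _ => simp
      | z :: M, hc, hyL => exact isChain_remove_target M z hc (fun hx => hyL (by simp [hx]))
    obtain ⟨v, hv, hvS⟩ := hS L a b hc' h1 h2 ha hb
    exact hcon v hv (by simp [hvS])
  have hcx := h _ hsepx
  have hcy := h _ hsepy
  have hcx' := Finset.card_insert_le x S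
  have hcy' := Finset.card_insert_le y S
  have hxS : x ∉ S := fun hx => by rw [Finset.insert_eq_of_mem hx] at hcx; omega
  have hyS : y ∉ S := fun hx => by rw [Finset.insert_eq_of_mem hx] at hcy; omega
  have hP : HasDisjointPaths r' A (insert x S) n := by
    refine ih _ hlt r' A _ rfl fun S' hS' => h S' ?_
    intro L a b hc h1 h2 ha hb
    obtain ⟨L₁, z, L₂, rfl, hz, hL⟩ := exists_first_mem (· ∈ insert x S) L
      (hsepx L a b hc h1 h2 ha hb)
    have hc1 : (L₁ ++ [z]).IsChain r := by
      have : L₁ ++ z :: L₂ = (L₁ ++ [z]) ++ L₂ := by simp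
      rw [this] at hc
      exact (List.isChain_append.1 hc).1
    obtain ⟨v, hv, hvS⟩ := hS' (L₁ ++ [z]) a z
      (isChain_remove_source L₁ z hc1 (fun hx => hL x hx (by simp)))
      (by cases L₁ <;> simpa using h1) (by simp) ha hz
    refine ⟨v, ?_, hvS⟩
    simp only [List.mem_append, List.mem_cons, List.not_mem_nil, or_false] at hv ⊢
    tauto
  have hQ : HasDisjointPaths r' (insert y S) B n := by
    refine ih _ hlt r' _ B rfl fun S' hS' => h S' ?_
    intro L a b hc h1 h2 ha hb
    obtain ⟨L₁, z, L₂, rfl, hz, hL⟩ := exists_last_mem (· ∈ insert y S) L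
      (hsepy L a b hc h1 h2 ha hb)
    have hc1 : (z :: L₂).IsChain r := (List.isChain_append.1 hc).2.1
    obtain ⟨v, hv, hvS⟩ := hS' (z :: L₂) z b
      (isChain_remove_target L₂ z hc1 (fun hx => hL y hx (by simp)))
      (by simp) (by simpa using h2) hz hb
    exact ⟨v, by simp only [List.mem_append]; tauto, hvS⟩
  have hTx : (insert x S).card = n := by omega
  have hTy : (insert y S).card = n := by omega
  obtain ⟨p, hp, hpd⟩ := hP.index_target hTx
  obtain ⟨q, hq, hqd⟩ := hQ.index_source hTy
  have hpm : ∀ v ∈ insert x S, v ∈ p v := fun v hv => by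
    obtain ⟨a, -, h⟩ := hp v hv
    exact List.mem_of_getLast? h.2.2.2
  have hqm : ∀ v ∈ insert y S, v ∈ q v := fun v hv => by
    obtain ⟨a, -, h⟩ := hq v hv
    exact List.mem_of_head? h.2.2.1
  have hpS : ∀ v ∈ insert x S, ∀ z ∈ p v, z ∈ S → z = v := by
    intro v hv z hz hzS
    by_contra hne
    exact hpd v hv z (by simp [hzS]) (Ne.symm hne) z hz (hpm z (by simp [hzS]))
  have hqS : ∀ v ∈ insert y S, ∀ z ∈ q v, z ∈ S → z = v := by
    intro v hv z hz hzS
    by_contra hne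
    exact hqd v hv z (by simp [hzS]) (Ne.symm hne) z hz (hqm z (by simp [hzS]))
  -- Elsewhere than in `S`, a common vertex would give a walk from `A` to `B` missing `S`.
  have key : ∀ v ∈ insert x S, ∀ w ∈ insert y S, ∀ z ∈ p v, z ∈ q w → z ∈ S := by
    intro v hv w hw z hzp hzq
    by_contra hzS
    obtain ⟨a, ha, hpv⟩ := hp v hv
    obtain ⟨b, hb, hqw⟩ := hq w hw
    obtain ⟨L₁, L₂, hL⟩ := List.append_of_mem hzp
    obtain ⟨M₁, M₂, hM⟩ := List.append_of_mem hzq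
    rw [hL] at hpv
    rw [hM] at hqw
    obtain ⟨c1, n1, e1, l1⟩ := hpv
    obtain ⟨c2, n2, e2, l2⟩ := hqw
    obtain ⟨u, hu, huS⟩ := hS (L₁ ++ z :: M₂) a b
      (by
        rw [List.isChain_append] at c1 c2 ⊢
        exact ⟨c1.1, c2.2.1, by simpa using c1.2.2⟩)
      (by cases L₁ <;> simpa using e1) (by simpa using l2) ha hb
    have huz : u ≠ z := fun e => hzS (e ▸ huS)
    simp only [List.mem_append, List.mem_cons, huz, false_or] at hu
    rcases hu with hu | hu
    · have huv := hpS v hv u (by rw [hL]; simp [hu]) huS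
      subst huv
      have : u ∈ z :: L₂ := by
        apply List.mem_of_getLast?
        simpa using l1
      exact (List.nodup_append.1 n1).2.2 u hu u this rfl
    · have huv := hqS w hw u (by rw [hM]; simp [hu]) huS
      subst huv
      have : u ∈ M₁ ++ [z] := by
        apply List.mem_of_head?
        rw [← e2]
        cases M₁ <;> simp
      have n2' : ((M₁ ++ [z]) ++ M₂).Nodup := by simpa using n2
      exact (List.nodup_append.1 n2').2.2 u this u hu rfl
  let e := (Finset.equivFinOfCardEq hTx).symm
  let g : V → List V := fun v => if v = x then p x ++ q y else p v ++ (q v).tail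
  have hgmem : ∀ v ∈ insert x S, ∀ z ∈ g v,
      z ∈ p v ∨ ∃ w ∈ insert y S, z ∈ q w ∧ ((v = x ∧ w = y) ∨ (v ∈ S ∧ w = v)) := by
    intro v hv z hz
    by_cases hvx : v = x
    · simp only [g, hvx, if_true, List.mem_append] at hz
      rcases hz with hz | hz
      · left; rwa [hvx]
      · right; exact ⟨y, by simp, hz, Or.inl ⟨hvx, rfl⟩⟩
    · simp only [g, hvx, if_false, List.mem_append] at hz
      have hvS : v ∈ S := by simpa [hvx] using hv
      rcases hz with hz | hz
      · exact Or.inl hz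
      · right; exact ⟨v, by simp [hvS], List.mem_of_mem_tail hz, Or.inr ⟨hvS, rfl⟩⟩
  refine ⟨fun i => g (e i), fun i => ?_, fun i j hij z hz hz' => ?_⟩
  · suffices H : ∀ v ∈ insert x S, ∃ a ∈ A, ∃ b ∈ B, IsListPath r (g v) a b from H _ (e i).2
    intro v hv
    by_cases hvx : v = x
    · subst hvx
      obtain ⟨a, ha, c1, n1, e1, l1⟩ := hp v hv
      obtain ⟨b, hb, c2, n2, e2, l2⟩ := hq y (by simp)
      refine ⟨a, ha, b, hb, ?_⟩
      simp only [g, if_true]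
      refine ⟨?_, ?_, by simp [e1], by simp [l2]⟩
      · rw [List.isChain_append]
        refine ⟨c1.imp hle, c2.imp hle, ?_⟩
        intro u hu w hw
        rw [l1] at hu; rw [e2] at hw
        simp only [Option.mem_def, Option.some.injEq] at hu hw
        subst hu; subst hw; exact hxy
      · rw [List.nodup_append]
        refine ⟨n1, n2, fun u hu w hw huw => ?_⟩
        subst huw
        have huS := key v hv y (by simp) u hu hw
        exact hxS (hpS v hv u hu huS ▸ huS)
    · have hvS : v ∈ S := by simpa [hvx] using hv
      obtain ⟨a, ha, c1, n1, e1, l1⟩ := hp v hv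
      obtain ⟨b, hb, hqv⟩ := hq v (by simp [hvS])
      refine ⟨a, ha, b, hb, ?_⟩
      simp only [g, hvx, if_false]
      have hsub : ∀ u ∈ p v, u ∈ q v → u = v := fun u hu hu' =>
        hpS v hv u hu (key v hv v (by simp [hvS]) u hu hu')
      generalize q v = Q at hqv hsub ⊢
      match Q, hqv with
      | [], hqv => simp [IsListPath] at hqv
      | c :: Q, ⟨c2, n2, e2, l2⟩ =>
        simp only [List.head?_cons, Option.some.injEq] at e2
        subst e2
        simp only [List.tail_cons]
        refine ⟨?_, ?_, by simp [e1], ?_⟩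
        · rw [List.isChain_append]
          rw [List.isChain_cons] at c2
          refine ⟨c1.imp hle, c2.2.imp hle, ?_⟩
          intro u hu w hw
          rw [l1] at hu
          simp only [Option.mem_def, Option.some.injEq] at hu
          subst hu; exact hle _ _ (c2.1 w hw)
        · rw [List.nodup_append]
          rw [List.nodup_cons] at n2
          refine ⟨n1, n2.2, fun u hu w hw huw => ?_⟩
          subst huw
          exact n2.1 (hsub u hu (by simp [hw]) ▸ hw)
        · cases Q with
          | nil => simpa [l1] using l2
          | cons d Q => simpa using l2
  · have hne : (e i : V) ≠ e j := fun h => hij (e.injective (Subtype.ext h))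
    suffices H : ∀ v ∈ insert x S, ∀ w ∈ insert x S, v ≠ w → z ∈ g v → z ∈ g w → False from
      H _ (e i).2 _ (e j).2 hne hz hz'
    clear hne hz hz'
    intro v hv w hw hne hz hz'
    rcases hgmem v hv z hz with h1 | ⟨v', hv', h1, h1'⟩ <;>
    rcases hgmem w hw z hz' with h2 | ⟨w', hw', h2, h2'⟩
    · exact hpd v hv w hw hne z h1 h2
    · have hzS := key v hv w' hw' z h1 h2
      have e1 := hpS v hv z h1 hzS
      have e2 := hqS w' hw' z h2 hzS
      rcases h2' with ⟨-, h⟩ | ⟨-, h⟩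
      · exact hyS (h ▸ e2 ▸ hzS)
      · exact hne (by rw [← e1, e2, h])
    · have hzS := key w hw v' hv' z h2 h1
      have e1 := hpS w hw z h2 hzS
      have e2 := hqS v' hv' z h1 hzS
      rcases h1' with ⟨-, h⟩ | ⟨-, h⟩
      · exact hyS (h ▸ e2 ▸ hzS)
      · exact hne (by rw [← e1, e2, h])
    · by_cases hvw : v' = w'
      · subst hvw
        rcases h1' with ⟨h3, h4⟩ | ⟨h3, h4⟩ <;> rcases h2' with ⟨h5, h6⟩ | ⟨h5, h6⟩
        · exact hne (h3.trans h5.symm)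
        · exact hyS (by rw [← h4, h6]; exact h5)
        · exact hyS (by rw [← h6, h4]; exact h3)
        · exact hne (h4.symm.trans h6)
      · exact hqd v' hv' w' hw' hvw z h1 h2

/-! ### Connectivity after deleting vertices -/

/-- The graph `G` with all edges at vertices of `X` removed. The vertices of `X` stay as isolated
vertices, which keeps the vertex type fixed. -/
def avoid {V : Type*} (G : SimpleGraph V) (X : Finset V) : SimpleGraph V where
  Adj x y := G.Adj x y ∧ x ∉ X ∧ y ∉ X
  symm := ⟨fun _ _ h => ⟨h.1.symm, h.2.2, h.2.1⟩⟩
  loopless := ⟨fun _ h => h.1.ne rfl⟩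

/-- Deleting `R` and fewer than `c` further vertices leaves a connected graph: for every such set `A`
of deleted vertices, a set `D` that contains a vertex outside `A` and is closed under adjacency
outside `A` contains all vertices outside `A`. -/
def ConnectedAbove {V : Type*} (G : SimpleGraph V) (R : Finset V) (c : ℕ) : Prop :=
  ∀ A : Finset V, R ⊆ A → A.card < R.card + c → ∀ D : Set V, (∃ x ∈ D, x ∉ A) →
    (∀ x ∈ D, x ∉ A → ∀ y, y ∉ A → G.Adj x y → y ∈ D) → ∀ y, y ∉ A → y ∈ D

theorem SConnected.connectedAbove {V : Type*} [Fintype V] {G : SimpleGraph V} {c d : ℕ}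
    (h : SConnected G c) (hd : d ≤ c) : ConnectedAbove G ∅ d := by
  intro A _ hA D hD hcl y hy
  obtain ⟨x, hx, hxA⟩ := hD
  have hc := h.2 (A : Set V) (by rw [Set.ncard_coe_finset]; simp at hA; omega)
  obtain ⟨p⟩ := hc.preconnected ⟨x, by simpa using hxA⟩ ⟨y, by simpa using hy⟩
  have : ∀ (u v : ((A : Set V)ᶜ : Set V)) (p : (G.induce (A : Set V)ᶜ).Walk u v),
      (u : V) ∈ D → (v : V) ∈ D := by
    intro u v p
    induction p with
    | nil => exact id
    | @cons u v w e _ ih =>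
      intro hu
      exact ih (hcl u hu (fun h => u.2 h) v (fun h => v.2 h) (by simpa using e))
  exact this _ _ p hx

theorem avoid_reachable_not_mem {V : Type*} {G : SimpleGraph V} {X : Finset V} {a v : V}
    (ha : a ∉ X) (h : (avoid G X).Reachable a v) : v ∉ X := by
  obtain ⟨p⟩ := h
  induction p with
  | nil => exact ha
  | cons e _ ih => exact ih e.2.2

theorem avoid_path {V : Type*} {G : SimpleGraph V} {X : Finset V} {a b : V}
    (ha : a ∉ X) (p : (avoid G X).Walk a b) (hp : p.IsPath) :
    IsListPath G.Adj p.support a b ∧ ∀ v ∈ p.support, v ∉ X := by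
  refine ⟨⟨?_, hp.support_nodup, ?_, ?_⟩, fun v hv => ?_⟩
  · exact p.isChain_adj_support.imp fun _ _ h => h.1
  · rw [List.head?_eq_some_head p.support_ne_nil, p.head_support]
  · rw [List.getLast?_eq_some_getLast p.support_ne_nil, p.getLast_support]
  · classical
    exact avoid_reachable_not_mem ha ⟨p.takeUntil v hv⟩

/-! ### Linking the terminals -/

theorem card_terminals {ι V : Type*} [DecidableEq V] {s t : ι → V}
    (hst : Function.Injective (Sum.elim s t)) (I : Finset ι) :
    (I.image s ∪ I.image t).card = 2 * I.card := by
  have hs : Function.Injective s := fun i j h => Sum.inl_injective (hst (by simpa using h))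
  have ht : Function.Injective t := fun i j h => Sum.inr_injective (hst (by simpa using h))
  rw [Finset.card_union_of_disjoint, Finset.card_image_of_injective _ hs,
    Finset.card_image_of_injective _ ht]
  · omega
  · rw [Finset.disjoint_left]
    intro v hv hv'
    obtain ⟨i, -, rfl⟩ := Finset.mem_image.1 hv
    obtain ⟨j, -, h⟩ := Finset.mem_image.1 hv'
    have := @hst (Sum.inl i) (Sum.inr j) (by simpa using h.symm)
    simp at this

/-- The lists `P i`, for `i ∈ I`, are pairwise disjoint paths of `G` from `s i` to `t i`. -/
def IsLinkage {ι V : Type*} (G : SimpleGraph V) (s t : ι → V) (I : Finset ι)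
    (P : ι → List V) : Prop :=
  (∀ i ∈ I, IsListPath G.Adj (P i) (s i) (t i)) ∧
    ∀ i ∈ I, ∀ j ∈ I, i ≠ j → ∀ v ∈ P i, v ∉ P j

/-- A clique with as many vertices as there are terminals gives a linkage: disjoint paths from the
terminals into the clique are completed by single edges of the clique. -/
theorem linkage_of_clique {ι V : Type*} [Fintype V] [DecidableEq V]
    {G : SimpleGraph V} {s t : ι → V} (hst : Function.Injective (Sum.elim s t)) {I : Finset ι}
    {R K : Finset V} (hI : ∀ i ∈ I, s i ∉ R ∧ t i ∉ R) (hKR : ∀ v ∈ K, v ∉ R)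
    (hK : ∀ x ∈ K, ∀ y ∈ K, x ≠ y → G.Adj x y) (hKc : 2 * I.card ≤ K.card)
    (hconn : ConnectedAbove G R (2 * I.card)) :
    ∃ P : ι → List V, IsLinkage G s t I P ∧ ∀ i ∈ I, ∀ v ∈ P i, v ∉ R := by
  set T := I.image s ∪ I.image t with hT
  have hTc : T.card = 2 * I.card := card_terminals hst I
  have hsT : ∀ i ∈ I, s i ∈ T := fun i hi =>
    Finset.mem_union_left _ (Finset.mem_image_of_mem _ hi)
  have htT : ∀ i ∈ I, t i ∈ T := fun i hi =>
    Finset.mem_union_right _ (Finset.mem_image_of_mem _ hi)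
  have hTR : ∀ v ∈ T, v ∉ R := by
    intro v hv
    rcases Finset.mem_union.1 hv with h | h <;> obtain ⟨i, hi, rfl⟩ := Finset.mem_image.1 h
    · exact (hI i hi).1
    · exact (hI i hi).2
  have hM : HasDisjointPaths (avoid G R).Adj T K (2 * I.card) := by
    refine menger _ _ _ _ _ rfl fun S hS => ?_
    -- A smaller separator `S` misses a terminal `a` and a clique vertex `b`; the set of vertices
    -- reached from `a` outside `S` is closed, so connectivity leads from `a` to `b`.
    by_contra hlt
    push Not at hlt
    obtain ⟨a, haT, haS⟩ : ∃ a ∈ T, a ∉ S := by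
      by_contra hcon
      push Not at hcon
      have := Finset.card_le_card (show T ⊆ S from hcon)
      omega
    obtain ⟨b, hbK, hbS⟩ : ∃ b ∈ K, b ∉ S := by
      by_contra hcon
      push Not at hcon
      have := Finset.card_le_card (show K ⊆ S from hcon)
      omega
    have hc := Finset.card_union_le R S
    have := hconn (R ∪ S) Finset.subset_union_left (by omega)
      {x | ∃ L : List V, L.IsChain (avoid G R).Adj ∧ L.head? = some a ∧ L.getLast? = some x ∧
        ∀ v ∈ L, v ∉ S}
      ⟨a, ⟨[a], by simp [haS]⟩, by simp [haS, hTR a haT]⟩ ?_ b (by simp [hbS, hKR b hbK])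
    · obtain ⟨L, h1, h2, h3, h4⟩ := this
      obtain ⟨v, hv, hvS⟩ := hS L a b h1 h2 h3 haT hbK
      exact h4 v hv hvS
    · rintro x ⟨L, h1, h2, h3, h4⟩ hx y hy hxy
      simp only [Finset.mem_union, not_or] at hx hy
      refine ⟨L ++ [y], ?_, by simp [h2], by simp, ?_⟩
      · rw [List.isChain_append]
        refine ⟨h1, by simp, ?_⟩
        intro u hu w hw
        rw [h3] at hu
        simp only [Option.mem_def, Option.some.injEq, List.head?_cons] at hu hw
        subst hu; subst hw
        exact ⟨hxy, hx.1, hy.1⟩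
      · intro v hv
        rcases List.mem_append.1 hv with h | h
        · exact h4 v h
        · rw [List.mem_singleton.1 h]; exact hy.2
  obtain ⟨p, hp, hpd⟩ := hM.index_source hTc
  have havoid : ∀ L : List V, L.IsChain (avoid G R).Adj → ∀ a, L.head? = some a → a ∉ R →
      ∀ v ∈ L, v ∉ R := by
    intro L
    induction L with
    | nil => simp
    | cons c L ih =>
      intro hc a ha haR v hv
      simp only [List.head?_cons, Option.some.injEq] at ha
      subst ha
      rcases List.mem_cons.1 hv with rfl | hv
      · exact haR
      · rw [List.isChain_cons] at hc
        cases L with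
        | nil => simp at hv
        | cons d L => exact ih hc.2 d (by simp) (hc.1 d (by simp)).2.2 v hv
  have hpR : ∀ v ∈ T, ∀ z ∈ p v, z ∉ R := by
    intro v hv
    obtain ⟨a, -, h⟩ := hp v hv
    exact havoid _ h.1 v h.2.2.1 (hTR v hv)
  have hstne : ∀ i j, s i ≠ t j := fun i j h => by
    have := @hst (Sum.inl i) (Sum.inr j) (by simpa using h)
    simp at this
  have hs : Function.Injective s := fun i j h => Sum.inl_injective (hst (by simpa using h))
  have ht : Function.Injective t := fun i j h => Sum.inr_injective (hst (by simpa using h))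
  refine ⟨fun i => p (s i) ++ (p (t i)).reverse, ⟨fun i hi => ?_, fun i hi j hj hij v hv hv' => ?_⟩,
    fun i hi v hv => ?_⟩
  · obtain ⟨a, ha, c1, n1, e1, l1⟩ := hp _ (hsT i hi)
    obtain ⟨b, hb, c2, n2, e2, l2⟩ := hp _ (htT i hi)
    have hdis := hpd _ (hsT i hi) _ (htT i hi) (hstne i i)
    refine ⟨?_, ?_, by simp [e1], by simp [e2]⟩
    · rw [List.isChain_append]
      refine ⟨c1.imp fun _ _ h => h.1, ?_, ?_⟩
      · rw [List.isChain_reverse]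
        exact c2.imp fun _ _ h => h.1.symm
      · intro u hu w hw
        rw [List.head?_reverse, l2] at hw
        rw [l1] at hu
        simp only [Option.mem_def, Option.some.injEq] at hu hw
        subst hu; subst hw
        refine hK _ ha _ hb fun hab => ?_
        exact hdis a (List.mem_of_getLast? l1) (hab ▸ List.mem_of_getLast? l2)
    · rw [List.nodup_append]
      refine ⟨n1, by simpa using n2, fun u hu w hw huw => ?_⟩
      subst huw
      exact hdis u hu (by simpa using hw)
  · simp only [List.mem_append, List.mem_reverse] at hv hv'
    rcases hv with h | h <;> rcases hv' with h' | h'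
    · exact hpd _ (hsT i hi) _ (hsT j hj) (fun e => hij (hs e)) v h h'
    · exact hpd _ (hsT i hi) _ (htT j hj) (hstne i j) v h h'
    · exact hpd _ (htT i hi) _ (hsT j hj) (hstne j i).symm v h h'
    · exact hpd _ (htT i hi) _ (htT j hj) (fun e => hij (ht e)) v h h'
  · simp only [List.mem_append, List.mem_reverse] at hv
    rcases hv with h | h
    · exact hpR _ (hsT i hi) v h
    · exact hpR _ (htT i hi) v h

theorem dist_le_succ {V : Type*} {H : SimpleGraph V} {a x y : V} (h : H.Reachable a x)
    (hxy : H.Adj x y) : H.dist a y ≤ H.dist a x + 1 := by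
  obtain ⟨p, hp⟩ := h.exists_walk_length_eq_dist
  have := H.dist_le (p.append (Walk.cons hxy Walk.nil))
  simpa [hp] using this

theorem exists_reachable_dist_eq {V : Type*} {H : SimpleGraph V} {a b : V} (h : H.Reachable a b) {i : ℕ}
    (hi : i ≤ H.dist a b) : ∃ x, H.Reachable a x ∧ H.dist a x = i := by
  obtain ⟨p⟩ := h
  induction p using Walk.concatRec with
  | Hnil => exact ⟨_, Reachable.refl _, by simp at hi ⊢; omega⟩
  | @Hconcat u v w p e ih =>
    by_cases hc : i ≤ H.dist u v
    · exact ih hc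
    · have := dist_le_succ ⟨p⟩ e
      exact ⟨w, ⟨p.concat e⟩, by omega⟩

/-- If `b` is at distance at least `m` from `a` and there are no `m` independent vertices reachable
from `a`, then some distance layer strictly between `a` and `b` is a clique. -/
theorem exists_clique_layer {V : Type*} {H : SimpleGraph V} {a b : V} (hab : H.Reachable a b)
    {m : ℕ} (hd : m ≤ H.dist a b)
    (hα : ∀ f : Fin m → V, Function.Injective f → (∀ i, H.Reachable a (f i)) →
      ∃ i j, H.Adj (f i) (f j)) :
    ∃ i, 1 ≤ i ∧ i < H.dist a b ∧ ∀ x y, H.Reachable a x → H.dist a x = i →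
      H.Reachable a y → H.dist a y = i → x ≠ y → H.Adj x y := by
  by_contra hcon
  push Not at hcon
  have hex : ∀ i, ∃ u w, i ≤ H.dist a b → H.Reachable a u ∧ H.dist a u = i ∧ H.Reachable a w ∧
      H.dist a w = i ∧ ¬ H.Adj u w ∧ (1 ≤ i → i < H.dist a b → u ≠ w) := by
    intro i
    by_cases hi : 1 ≤ i ∧ i < H.dist a b
    · obtain ⟨x, y, h1, h2, h3, h4, h5, h6⟩ := hcon i hi.1 hi.2
      exact ⟨x, y, fun _ => ⟨h1, h2, h3, h4, h6, fun _ _ => h5⟩⟩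
    · by_cases hi' : i ≤ H.dist a b
      · obtain ⟨x, h1, h2⟩ := exists_reachable_dist_eq hab hi'
        exact ⟨x, x, fun _ => ⟨h1, h2, h1, h2, H.loopless.irrefl x, fun h h' => absurd ⟨h, h'⟩ hi⟩⟩
      · exact ⟨a, a, fun h => absurd h hi'⟩
  choose u w huw using hex
  -- `f` runs through the even layers: `a` alone in layer `0`, then both chosen vertices of each
  -- layer `2, 4, …`, until `m` vertices are collected. The layer of `b`, if reached, is reached
  -- only by the last index, so the coincidence `u = w` there does no harm.
  let f : Fin m → V := fun j =>
    if (j : ℕ) % 2 = 1 then u (2 * ((j + 1) / 2)) else w (2 * ((j + 1) / 2))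
  have hle : ∀ j : Fin m, 2 * (((j : ℕ) + 1) / 2) ≤ H.dist a b := fun j => by omega
  have hf : ∀ j : Fin m, H.Reachable a (f j) ∧ H.dist a (f j) = 2 * (((j : ℕ) + 1) / 2) := by
    intro j
    have h := huw _ (hle j)
    by_cases hj : (j : ℕ) % 2 = 1
    · simp only [f, hj, if_true]; exact ⟨h.1, h.2.1⟩
    · simp only [f, hj, if_false]; exact ⟨h.2.2.1, h.2.2.2.1⟩
  have hinj : Function.Injective f := by
    have key : ∀ j j' : Fin m, j < j' → f j ≠ f j' := by
      intro j j' hlt he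
      have e1 := (hf j).2
      rw [he, (hf j').2] at e1
      have hlt' : (j : ℕ) < j' := hlt
      have hj : (j : ℕ) % 2 = 1 := by omega
      have hj' : ¬ (j' : ℕ) % 2 = 1 := by omega
      have h := (huw _ (hle j)).2.2.2.2.2 (by omega) (by omega)
      simp only [f, hj, hj', if_true, if_false, e1] at he
      exact h he
    intro j j' he
    rcases lt_trichotomy j j' with h | h | h
    · exact absurd he (key _ _ h)
    · exact h
    · exact absurd he.symm (key _ _ h)
  obtain ⟨j, j', hadj⟩ := hα f hinj fun j => (hf j).1
  have h1 := dist_le_succ (hf j).1 hadj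
  have h2 := dist_le_succ (hf j').1 hadj.symm
  rw [(hf j).2, (hf j').2] at h1 h2
  have he : 2 * (((j : ℕ) + 1) / 2) = 2 * (((j' : ℕ) + 1) / 2) := by omega
  have h := (huw _ (hle j')).2.2.2.2.1
  by_cases hj : (j : ℕ) % 2 = 1 <;> by_cases hj' : (j' : ℕ) % 2 = 1 <;>
    simp only [f, hj, hj', if_true, if_false, he] at hadj
  · exact hadj.ne rfl
  · exact h hadj
  · exact h hadj.symm
  · exact hadj.ne rfl

/-- Induction on the set of pairs to be linked, with `R` the set of vertices already used up. -/
theorem exists_linkage {ι V : Type*} [DecidableEq ι] [Fintype V] [DecidableEq V]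
    {G : SimpleGraph V} {m : ℕ} (hm : 4 ≤ m)
    (hα : ∀ S : Finset V, ((S : Set V)).Pairwise (fun a b => ¬ G.Adj a b) → S.card < m)
    {s t : ι → V} (hst : Function.Injective (Sum.elim s t)) (I : Finset ι) :
    ∀ R : Finset V, (∀ i ∈ I, s i ∉ R ∧ t i ∉ R) → ConnectedAbove G R (m * I.card) →
      ∃ P : ι → List V, IsLinkage G s t I P ∧ ∀ i ∈ I, ∀ v ∈ P i, v ∉ R := by
  have hstne : ∀ i j, s i ≠ t j := fun i j h => by
    have := @hst (Sum.inl i) (Sum.inr j) (by simpa using h)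
    simp at this
  have hs : Function.Injective s := fun i j h => Sum.inl_injective (hst (by simpa using h))
  have ht : Function.Injective t := fun i j h => Sum.inr_injective (hst (by simpa using h))
  induction I using Finset.induction_on with
  | empty => exact fun R _ _ => ⟨fun _ => [], by simp [IsLinkage]⟩
  | insert i₀ J hi₀ ih =>
  intro R hR hconn
  rw [Finset.card_insert_of_notMem hi₀] at hconn
  have hmul : m * (J.card + 1) = m * J.card + m := by ring
  have h4 : 4 * J.card ≤ m * J.card := Nat.mul_le_mul_right _ hm
  set T := J.image s ∪ J.image t with hT
  have hTc : T.card = 2 * J.card := card_terminals hst J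
  have hRT : (R ∪ T).card ≤ R.card + 2 * J.card := hTc ▸ Finset.card_union_le R T
  have haX : s i₀ ∉ R ∪ T := by
    simp only [hT, Finset.mem_union, Finset.mem_image, not_or, not_exists, not_and]
    exact ⟨(hR i₀ (by simp)).1, fun j hj e => hi₀ (hs e ▸ hj), fun j hj e => hstne _ _ e.symm⟩
  have hbX : t i₀ ∉ R ∪ T := by
    simp only [hT, Finset.mem_union, Finset.mem_image, not_or, not_exists, not_and]
    exact ⟨(hR i₀ (by simp)).2, fun j hj e => hstne _ _ e, fun j hj e => hi₀ (ht e ▸ hj)⟩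
  set H := avoid G (R ∪ T) with hH
  have hreach : H.Reachable (s i₀) (t i₀) := by
    refine hconn (R ∪ T) Finset.subset_union_left (by omega) {v | H.Reachable (s i₀) v}
      ⟨s i₀, Reachable.refl _, haX⟩ ?_ _ hbX
    intro x hx hxA y hy hxy
    exact Reachable.trans hx (Adj.reachable ⟨hxy, hxA, hy⟩)
  by_cases hd : m ≤ H.dist (s i₀) (t i₀)
  · obtain ⟨i, h1, h2, hcl⟩ := exists_clique_layer hreach hd (by
      intro f hf hfr
      by_contra hcon
      push Not at hcon
      have := hα (Finset.univ.image f) (by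
        intro x hx y hy _ hxy
        simp only [Finset.coe_image, Finset.coe_univ, Set.image_univ, Set.mem_range] at hx hy
        obtain ⟨j, rfl⟩ := hx
        obtain ⟨j', rfl⟩ := hy
        exact hcon j j' ⟨hxy, avoid_reachable_not_mem haX (hfr j),
          avoid_reachable_not_mem haX (hfr j')⟩)
      rw [Finset.card_image_of_injective _ hf] at this
      simp at this)
    classical
    let K : Finset V := Finset.univ.filter fun v => H.Reachable (s i₀) v ∧ H.dist (s i₀) v = i
    have hK : ∀ v, v ∈ K ↔ H.Reachable (s i₀) v ∧ H.dist (s i₀) v = i := by simp [K]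
    have hKR : ∀ v ∈ K, v ∉ R := fun v hv hvR =>
      avoid_reachable_not_mem haX ((hK v).1 hv).1 (Finset.mem_union_left _ hvR)
    -- The layer `K` together with `R ∪ T` separates the two ends, hence is large.
    have hKc : R.card + m * (J.card + 1) ≤ (R ∪ T ∪ K).card := by
      by_contra hlt
      push Not at hlt
      have hmem := hconn (R ∪ T ∪ K)
        (Finset.subset_union_left.trans Finset.subset_union_left) hlt
        {v | H.Reachable (s i₀) v ∧ H.dist (s i₀) v < i}
        ⟨s i₀, ⟨Reachable.refl _, by simpa using Nat.lt_of_lt_of_le Nat.zero_lt_one h1⟩, by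
          rw [Finset.mem_union, hK]
          rintro (h | h)
          · exact haX h
          · have := h.2
            simp at this
            omega⟩
        (by
          rintro x ⟨hx, hxi⟩ hxA y hy hxy
          rw [Finset.mem_union, not_or] at hxA hy
          have hadj : H.Adj x y := ⟨hxy, hxA.1, hy.1⟩
          have hry : H.Reachable (s i₀) y := hx.trans hadj.reachable
          have hle := dist_le_succ hx hadj
          have hne : H.dist (s i₀) y ≠ i := fun h => hy.2 ((hK y).2 ⟨hry, h⟩)
          exact ⟨hry, by omega⟩)
        (t i₀) (by
          rw [Finset.mem_union, hK]
          rintro (h | h)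
          · exact hbX h
          · have := h.2
            omega)
      have := hmem.2
      omega
    have hc3 := Finset.card_union_le (R ∪ T) K
    refine linkage_of_clique hst hR hKR ?_ ?_ ?_
    · intro x hx y hy hxy
      rw [hK] at hx hy
      exact (hcl x y hx.1 hx.2 hy.1 hy.2 hxy).1
    · rw [Finset.card_insert_of_notMem hi₀]
      omega
    · intro A hA hAc
      rw [Finset.card_insert_of_notMem hi₀] at hAc
      exact hconn A hA (by omega)
  · push Not at hd
    obtain ⟨p, hp, hpl⟩ := hreach.exists_path_of_dist
    obtain ⟨hL, hLX⟩ := avoid_path haX p hp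
    set L := p.support with hLdef
    have hLlen : L.length ≤ m := by
      rw [hLdef, Walk.length_support, hpl]; omega
    have hLc : L.toFinset.card ≤ m := (List.toFinset_card_le L).trans hLlen
    have hdisj : Disjoint R L.toFinset := by
      rw [Finset.disjoint_left]
      intro v hv hv'
      exact hLX v (by simpa using hv') (Finset.mem_union_left _ hv)
    have hRc := Finset.card_union_of_disjoint hdisj
    obtain ⟨P, hP, hPR⟩ := ih (R ∪ L.toFinset) (by
        intro i hi
        have hRi := hR i (by simp [hi])
        simp only [Finset.mem_union, List.mem_toFinset, not_or]
        refine ⟨⟨hRi.1, fun h => hLX _ h ?_⟩, ⟨hRi.2, fun h => hLX _ h ?_⟩⟩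
        · exact Finset.mem_union_right _ (Finset.mem_union_left _ (Finset.mem_image_of_mem _ hi))
        · exact Finset.mem_union_right _ (Finset.mem_union_right _ (Finset.mem_image_of_mem _ hi)))
      (fun A hA hAc => hconn A (Finset.subset_union_left.trans hA) (by omega))
    simp only [Finset.mem_union, List.mem_toFinset, not_or] at hPR
    have hne : ∀ i ∈ J, i ≠ i₀ := fun i hi e => hi₀ (e ▸ hi)
    refine ⟨Function.update P i₀ L, ⟨fun i hi => ?_, fun i hi j hj hij v hv hv' => ?_⟩,
      fun i hi v hv => ?_⟩
    · rcases Finset.mem_insert.1 hi with rfl | hi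
      · simpa using hL
      · rw [Function.update_of_ne (hne i hi)]; exact hP.1 i hi
    · rcases Finset.mem_insert.1 hi with hi' | hi' <;>
        rcases Finset.mem_insert.1 hj with hj' | hj'
      · exact hij (hi'.trans hj'.symm)
      · rw [Function.update_of_ne (hne j hj')] at hv'
        rw [hi', Function.update_self] at hv
        exact (hPR j hj' v hv').2 hv
      · rw [Function.update_of_ne (hne i hi')] at hv
        rw [hj', Function.update_self] at hv'
        exact (hPR i hi' v hv).2 hv'
      · rw [Function.update_of_ne (hne i hi')] at hv
        rw [Function.update_of_ne (hne j hj')] at hv'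
        exact hP.2 i hi' j hj' hij v hv hv'
    · rcases Finset.mem_insert.1 hi with rfl | hi
      · rw [Function.update_self] at hv
        exact fun h => hLX v hv (Finset.mem_union_left _ h)
      · rw [Function.update_of_ne (hne i hi)] at hv
        exact (hPR i hi v hv).1

/-! ### Enlarging a linkage -/

/-- `Q` is the nonempty list of inner vertices of a detour from `v` to `w` that lies outside `U`; the
case `v = w` is not excluded. -/
def IsConnector {V : Type*} (G : SimpleGraph V) (U : Finset V) (v w : V) (Q : List V) : Prop :=
  (v :: (Q ++ [w])).IsChain G.Adj ∧ Q.Nodup ∧ Q ≠ [] ∧ ∀ z ∈ Q, z ∉ U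

/-- Insertion of a detour between two consecutive vertices `v`, `x` of a path. -/
theorem IsListPath.insert {V : Type*} {G : SimpleGraph V} {U : Finset V} {A B Q : List V}
    {v x a b : V} (h : IsListPath G.Adj (A ++ v :: x :: B) a b)
    (hU : ∀ z ∈ A ++ v :: x :: B, z ∈ U) (hQ : IsConnector G U v x Q) :
    ∃ L', IsListPath G.Adj L' a b ∧ ∀ z, z ∈ L' ↔ z ∈ A ++ v :: x :: B ∨ z ∈ Q := by
  classical
  obtain ⟨c, n, e, l⟩ := h
  obtain ⟨cQ, nQ, -, dQ⟩ := hQ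
  have hperm : (A ++ v :: (Q ++ x :: B)).Perm ((A ++ v :: x :: B) ++ Q) := by
    rw [List.perm_iff_count]
    intro z
    simp only [List.count_append, List.count_cons]
    omega
  refine ⟨A ++ v :: (Q ++ x :: B), ⟨?_, ?_, ?_, ?_⟩, fun z => by
    rw [hperm.mem_iff, List.mem_append]⟩
  · rw [List.isChain_split] at c ⊢
    refine ⟨c.1, ?_⟩
    rw [← List.cons_append, List.isChain_split]
    exact ⟨cQ, (List.isChain_cons.1 c.2).2⟩
  · rw [hperm.nodup_iff, List.nodup_append]
    exact ⟨n, nQ, fun u hu w hw huw => dQ w hw (huw ▸ hU u hu)⟩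
  · cases A <;> simpa using e
  · simpa [List.getLast?_append, List.getLast?_cons] using l

/-- Given a detour from `v` to `w` and an edge between their successors `x` and `y`, reroute a path:
follow it to `v`, take the detour to `w`, run back to `x`, cross to `y` and continue to the end. -/
theorem IsListPath.cross {V : Type*} {G : SimpleGraph V} {U : Finset V} {A B D Q : List V}
    {v x w y a b : V} (h : IsListPath G.Adj (A ++ v :: x :: (B ++ w :: y :: D)) a b)
    (hU : ∀ z ∈ A ++ v :: x :: (B ++ w :: y :: D), z ∈ U) (hQ : IsConnector G U v w Q)
    (hxy : G.Adj x y) :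
    ∃ L', IsListPath G.Adj L' a b ∧
      ∀ z, z ∈ L' ↔ z ∈ A ++ v :: x :: (B ++ w :: y :: D) ∨ z ∈ Q := by
  classical
  obtain ⟨c, n, e, l⟩ := h
  obtain ⟨cQ, nQ, -, dQ⟩ := hQ
  have hperm : (A ++ v :: (Q ++ w :: (B.reverse ++ x :: y :: D))).Perm
      ((A ++ v :: x :: (B ++ w :: y :: D)) ++ Q) := by
    rw [List.perm_iff_count]
    intro z
    simp only [List.count_append, List.count_cons, List.count_reverse]
    omega
  refine ⟨_, ⟨?_, ?_, ?_, ?_⟩, fun z => by rw [hperm.mem_iff, List.mem_append]⟩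
  · rw [List.isChain_split] at c ⊢
    refine ⟨c.1, ?_⟩
    have c2 := (List.isChain_cons.1 c.2).2
    rw [← List.cons_append, List.isChain_split] at c2
    rw [← List.cons_append, List.isChain_split]
    refine ⟨cQ, ?_⟩
    rw [← List.cons_append, List.isChain_split]
    constructor
    · have h3 : (x :: B ++ [w]).reverse.IsChain G.Adj :=
        List.isChain_reverse.2 (c2.1.imp fun _ _ h => h.symm)
      simpa using h3
    · rw [List.isChain_cons_cons]
      exact ⟨hxy, (List.isChain_cons.1 c2.2).2⟩
  · rw [hperm.nodup_iff, List.nodup_append]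
    exact ⟨n, nQ, fun u hu w hw huw => dQ w hw (huw ▸ hU u hu)⟩
  · cases A <;> simpa using e
  · simpa [List.getLast?_append, List.getLast?_cons] using l

theorem list_split {V : Type*} (L : List V) (c : V) (j : ℕ) (h : j + 1 < L.length) :
    L = L.take j ++ L.getD j c :: L.getD (j + 1) c :: L.drop (j + 2) := by
  rw [List.getD_eq_getElem _ _ h, List.getD_eq_getElem _ _ (by omega : j < L.length),
    List.cons_getElem_drop_succ, List.cons_getElem_drop_succ, List.take_append_drop]

/-- A linkage that misses a vertex can be changed, within the same pairs of ends, so that it keeps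
all its vertices and gains a new one. -/
theorem exists_extension {ι V : Type*} [Fintype ι] [Nonempty ι] [DecidableEq ι]
    [Fintype V] [DecidableEq V] {G : SimpleGraph V} {k : ℕ} (hk : 0 < k)
    (hα : ∀ S : Finset V, ((S : Set V)).Pairwise (fun a b => ¬ G.Adj a b) → S.card < k)
    (hconn : ConnectedAbove G ∅ (k * Fintype.card ι)) {s t : ι → V} (hst : ∀ i, s i ≠ t i)
    {P : ι → List V} (hP : IsLinkage G s t Finset.univ P) {c₀ : V} (hc₀ : ∀ i, c₀ ∉ P i) :
    ∃ P' : ι → List V, IsLinkage G s t Finset.univ P' ∧ (∀ i, ∀ v ∈ P i, v ∈ P' i) ∧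
      ∃ i, ∃ v ∈ P' i, ∀ j, v ∉ P j := by
  classical
  set U : Finset V := Finset.univ.biUnion fun i => (P i).toFinset with hUdef
  have hU : ∀ z, z ∈ U ↔ ∃ i, z ∈ P i := by simp [hUdef]
  have hcU : c₀ ∉ U := by rw [hU]; push Not; exact hc₀
  by_contra hcon
  -- No single path can be replaced by one that also visits a nonempty set of uncovered vertices.
  have hno : ∀ i Q, Q ≠ [] → (∀ z ∈ Q, z ∉ U) → ¬ ∃ L', IsListPath G.Adj L' (s i) (t i) ∧
      ∀ z, z ∈ L' ↔ z ∈ P i ∨ z ∈ Q := by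
    rintro i Q hQ hQU ⟨L', hL', hmem⟩
    apply hcon
    refine ⟨Function.update P i L', ⟨fun j _ => ?_, fun j _ j' _ hjj v hv hv' => ?_⟩,
      fun j v hv => ?_, ?_⟩
    · by_cases hj : j = i
      · subst hj; simpa using hL'
      · rw [Function.update_of_ne hj]; exact hP.1 j (by simp)
    · have hold := hP.2 j (by simp) j' (by simp) hjj
      by_cases hj : j = i <;> by_cases hj' : j' = i
      · exact hjj (hj.trans hj'.symm)
      · rw [Function.update_of_ne hj'] at hv'
        rw [hj, Function.update_self, hmem] at hv
        rcases hv with hv | hv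
        · exact hold v (hj ▸ hv) hv'
        · exact hQU v hv ((hU v).2 ⟨j', hv'⟩)
      · rw [Function.update_of_ne hj] at hv
        rw [hj', Function.update_self, hmem] at hv'
        rcases hv' with hv' | hv'
        · exact hold v hv (hj' ▸ hv')
        · exact hQU v hv' ((hU v).2 ⟨j, hv⟩)
      · rw [Function.update_of_ne hj] at hv
        rw [Function.update_of_ne hj'] at hv'
        exact hold v hv hv'
    · by_cases hj : j = i
      · subst hj; rw [Function.update_self, hmem]; exact Or.inl hv
      · rwa [Function.update_of_ne hj]
    · obtain ⟨q, hq⟩ := List.exists_mem_of_ne_nil Q hQ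
      exact ⟨i, q, by rw [Function.update_self, hmem]; exact Or.inr hq,
        fun j hj => hQU q hq ((hU q).2 ⟨j, hj⟩)⟩
  -- `N v`: `v` has a neighbour in the component of `c₀` among the uncovered vertices.
  let N : V → Prop := fun v => ∃ d, (avoid G U).Reachable c₀ d ∧ G.Adj d v
  have hQ : ∀ v w, N v → N w → ∃ Q, IsConnector G U v w Q := by
    rintro v w ⟨d, hd, hdv⟩ ⟨d', hd', hdw⟩
    obtain ⟨p, hp⟩ := (hd.symm.trans hd').exists_isPath
    obtain ⟨⟨c, n, e, l⟩, hz⟩ := avoid_path (avoid_reachable_not_mem hcU hd) p hp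
    refine ⟨p.support, ?_, n, p.support_ne_nil, hz⟩
    rw [List.isChain_cons, List.isChain_append]
    refine ⟨fun u hu => ?_, c, by simp, fun u hu u' hu' => ?_⟩
    · rw [List.head?_append, e] at hu
      simp only [Option.some_or, Option.mem_def, Option.some.injEq] at hu
      exact hu ▸ hdv.symm
    · rw [l] at hu
      simp only [List.head?_cons, Option.mem_def, Option.some.injEq] at hu hu'
      exact hu ▸ hu' ▸ hdw
  have h1 : ∀ i A v x B, P i = A ++ v :: x :: B → N v → ¬ N x := by
    intro i A v x B hi hv hx
    obtain ⟨Q, hQ⟩ := hQ v x hv hx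
    refine hno i Q hQ.2.2.1 hQ.2.2.2 ?_
    rw [hi]
    exact IsListPath.insert (hi ▸ hP.1 i (by simp)) (fun z hz => (hU z).2 ⟨i, hi ▸ hz⟩) hQ
  have h2 : ∀ i A v x B w y D, P i = A ++ v :: x :: (B ++ w :: y :: D) → N v → N w →
      ¬ G.Adj x y := by
    intro i A v x B w y D hi hv hw hxy
    obtain ⟨Q, hQ⟩ := hQ v w hv hw
    refine hno i Q hQ.2.2.1 hQ.2.2.2 ?_
    rw [hi]
    exact IsListPath.cross (hi ▸ hP.1 i (by simp)) (fun z hz => (hU z).2 ⟨i, hi ▸ hz⟩) hQ hxy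
  by_cases hM : (U.filter N).card < k * Fintype.card ι
  · have hall : ∀ v ∈ U, N v := by
      intro v hv
      by_contra hNv
      refine avoid_reachable_not_mem hcU (hconn (U.filter N) (by simp) (by simpa using hM)
        {v | (avoid G U).Reachable c₀ v} ⟨c₀, Reachable.refl _, by simp [hcU]⟩ ?_ v
        (by simp [hNv])) hv
      intro x hx hxA y hy hxy
      have hyU : y ∉ U := fun h => hy (by rw [Finset.mem_filter]; exact ⟨h, x, hx, hxy⟩)
      exact Reachable.trans hx (Adj.reachable ⟨hxy, avoid_reachable_not_mem hcU hx, hyU⟩)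
    obtain ⟨i⟩ := ‹Nonempty ι›
    obtain ⟨c, n, e, l⟩ := hP.1 i (by simp)
    have hPU : ∀ z ∈ P i, N z := fun z hz => hall z ((hU z).2 ⟨i, hz⟩)
    match hi : P i with
    | [] => simp [hi] at e
    | [u] =>
      rw [hi] at e l
      simp only [List.head?_cons, List.getLast?_singleton, Option.some.injEq] at e l
      exact hst i (e.symm.trans l)
    | u :: u' :: B =>
      exact h1 i [] u u' B hi (hPU u (by simp [hi])) (hPU u' (by simp [hi]))
  · obtain ⟨i, hi⟩ : ∃ i, k ≤ ((P i).toFinset.filter N).card := by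
      by_contra hlt
      push Not at hlt
      have hsub : U.filter N ⊆ Finset.univ.biUnion fun i => (P i).toFinset.filter N := by
        intro z hz
        simp only [Finset.mem_filter, hU] at hz
        obtain ⟨⟨i, hi⟩, hz⟩ := hz
        simp only [Finset.mem_biUnion, Finset.mem_filter, List.mem_toFinset]
        exact ⟨i, by simp, hi, hz⟩
      have hb := (Finset.card_le_card hsub).trans
        (Finset.card_biUnion_le_card_mul _ _ (k - 1) fun i _ => by have := hlt i; omega)
      rw [Finset.card_univ] at hb
      have hpos : 0 < Fintype.card ι := Fintype.card_pos
      obtain ⟨k', rfl⟩ : ∃ k', k = k' + 1 := ⟨k - 1, by omega⟩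
      simp only [Nat.add_sub_cancel] at hb
      apply hM
      calc _ ≤ _ := hb
        _ < _ := by nlinarith
    obtain ⟨-, hnd, -, -⟩ := hP.1 i (by simp)
    set L := P i with hL
    let g : ℕ → V := fun j => L.getD j c₀
    have hg : ∀ j, j < L.length → g j ∈ L := fun j hj => by
      simp only [g, List.getD_eq_getElem _ _ hj, List.getElem_mem]
    have hginj : ∀ j j', j < L.length → j' < L.length → g j = g j' → j = j' := by
      intro j j' hj hj' h
      simp only [g, List.getD_eq_getElem _ _ hj, List.getD_eq_getElem _ _ hj'] at h
      exact (hnd.getElem_inj_iff).1 h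
    -- Positions of the vertices in `N` other than the last vertex of the path; the default value
    -- `c₀` of `g` is never used at these positions or their successors.
    let J := (Finset.range (L.length - 1)).filter fun j => N (g j)
    have hJ : ∀ j ∈ J, j + 1 < L.length ∧ N (g j) := fun j hj => by
      simp only [J, Finset.mem_filter, Finset.mem_range] at hj
      exact ⟨by omega, hj.2⟩
    have hJc : k ≤ J.card + 1 := by
      have hsub : L.toFinset.filter N ⊆ (insert (L.length - 1) J).image g := by
        intro z hz
        simp only [Finset.mem_filter, List.mem_toFinset] at hz
        obtain ⟨j, hj, rfl⟩ := List.getElem_of_mem hz.1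
        have hgj : g j = L[j] := by simp only [g, List.getD_eq_getElem _ _ hj]
        rw [Finset.mem_image]
        refine ⟨j, ?_, hgj⟩
        rw [Finset.mem_insert]
        by_cases hjl : j = L.length - 1
        · exact Or.inl hjl
        · right
          simp only [J, Finset.mem_filter, Finset.mem_range]
          exact ⟨by omega, hgj ▸ hz.2⟩
      exact hi.trans ((Finset.card_le_card hsub).trans
        (Finset.card_image_le.trans (Finset.card_insert_le _ _)))
    have hsucc : ∀ j ∈ J, ¬ N (g (j + 1)) := fun j hj =>
      h1 i _ _ _ _ (list_split L c₀ j (hJ j hj).1) (hJ j hj).2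
    have hcross : ∀ j ∈ J, ∀ j' ∈ J, j < j' → ¬ G.Adj (g (j + 1)) (g (j' + 1)) := by
      intro j hj j' hj' hlt
      have hne : j + 1 ≠ j' := fun e => hsucc j hj (e ▸ (hJ j' hj').2)
      have hl' := (hJ j' hj').1
      have e1 := list_split L c₀ j' hl'
      have e2 := list_split (L.take j') c₀ j (by rw [List.length_take]; omega)
      have e3 : (L.take j').getD j c₀ = g j := by
        simp only [g, List.getD_eq_getElem?_getD]
        rw [List.getElem?_take_of_lt (by omega)]
      have e4 : (L.take j').getD (j + 1) c₀ = g (j + 1) := by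
        simp only [g, List.getD_eq_getElem?_getD]
        rw [List.getElem?_take_of_lt (by omega)]
      rw [e3, e4] at e2
      rw [e2] at e1
      refine h2 i _ (g j) (g (j + 1)) _ (g j') (g (j' + 1)) _ 
        (e1.trans (by simp only [List.append_assoc, List.cons_append]; rfl)) (hJ j hj).2
        (hJ j' hj').2
    have hc₀g : ∀ j ∈ J, ¬ G.Adj c₀ (g (j + 1)) := fun j hj h =>
      hsucc j hj ⟨c₀, Reachable.refl _, h⟩
    have hcard : (insert c₀ (J.image fun j => g (j + 1))).card = J.card + 1 := by
      rw [Finset.card_insert_of_notMem, Finset.card_image_of_injOn]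
      · intro j hj j' hj' h
        have := hginj _ _ (hJ j hj).1 (hJ j' hj').1 h
        omega
      · rw [Finset.mem_image]
        rintro ⟨j, hj, h⟩
        exact hc₀ i (h ▸ hg _ (hJ j hj).1)
    have := hα (insert c₀ (J.image fun j => g (j + 1))) (by
      intro x hx y hy hxy hadj
      simp only [Finset.coe_insert, Finset.coe_image, Set.mem_insert_iff, Set.mem_image,
        Finset.mem_coe] at hx hy
      rcases hx with rfl | ⟨j, hj, rfl⟩ <;> rcases hy with rfl | ⟨j', hj', rfl⟩
      · exact hxy rfl
      · exact hc₀g j' hj' hadj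
      · exact hc₀g j hj hadj.symm
      · rcases lt_trichotomy j j' with h | h | h
        · exact hcross j hj j' hj' h hadj
        · subst h; exact hxy rfl
        · exact hcross j' hj' j hj h hadj.symm)
    omega

theorem exists_spanning {ι V : Type*} [Fintype ι] [Nonempty ι] [DecidableEq ι]
    [Fintype V] [DecidableEq V] {G : SimpleGraph V} {k : ℕ} (hk : 0 < k)
    (hα : ∀ S : Finset V, ((S : Set V)).Pairwise (fun a b => ¬ G.Adj a b) → S.card < k)
    (hconn : ConnectedAbove G ∅ (k * Fintype.card ι)) {s t : ι → V} (hst : ∀ i, s i ≠ t i)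
    (n : ℕ) : ∀ P : ι → List V, IsLinkage G s t Finset.univ P →
      (Finset.univ.filter fun v => ∀ i, v ∉ P i).card = n →
      ∃ P' : ι → List V, IsLinkage G s t Finset.univ P' ∧ ∀ v, ∃ i, v ∈ P' i := by
  induction n using Nat.strong_induction_on with
  | _ n ih =>
  intro P hP hn
  by_cases hall : ∀ v, ∃ i, v ∈ P i
  · exact ⟨P, hP, hall⟩
  · push Not at hall
    obtain ⟨c₀, hc₀⟩ := hall
    obtain ⟨P', hP', hsub, i, v, hv, hvn⟩ := exists_extension hk hα hconn hst hP hc₀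
    refine ih _ ?_ P' hP' rfl
    rw [← hn]
    apply Finset.card_lt_card
    rw [Finset.ssubset_iff_of_subset]
    · exact ⟨v, by simpa using hvn, by simpa using ⟨i, hv⟩⟩
    · intro u hu
      simp only [Finset.mem_filter, Finset.mem_univ, true_and] at hu ⊢
      exact fun i h => hu i (hsub i u h)

theorem IsListPath.exists_walk {V : Type*} {G : SimpleGraph V} {L : List V} {a b : V}
    (h : IsListPath G.Adj L a b) : ∃ p : G.Walk a b, p.IsPath ∧ p.support = L := by
  obtain ⟨c, n, e, l⟩ := h
  have hne : L ≠ [] := by rintro rfl; simp at e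
  have ha : L.head hne = a := by
    rw [List.head?_eq_some_head hne] at e; simpa using e
  have hb : L.getLast hne = b := by
    rw [List.getLast?_eq_some_getLast hne] at l; simpa using l
  subst ha; subst hb
  have hs := Walk.support_ofSupport hne c
  exact ⟨Walk.ofSupport L hne c, by rw [Walk.isPath_def, hs]; exact n, hs⟩

/-- If `α(G) < k` (`k > 1`) and the vertex connectivity of `G` is at least
`max (k·ℓ) (10·ℓ)` (`ℓ > 0`), then `G` is Hamiltonian-`ℓ`-linked: it has at least `2ℓ`
vertices and any `2ℓ` distinct vertices `s₁, …, s_ℓ, t₁, …, t_ℓ` admit `ℓ` pairwise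
vertex-disjoint paths `P i : s i — t i` that together cover all vertices of `G`. -/
theorem statement5 {V : Type*} [Fintype V] [DecidableEq V] (G : SimpleGraph V) (k ℓ : ℕ)
    (hk : 1 < k) (hℓ : 0 < ℓ)
    (hα : ∀ S : Finset V, ((S : Set V)).Pairwise (fun a b => ¬ G.Adj a b) → S.card < k)
    (hconn : SConnected G (max (k * ℓ) (10 * ℓ))) :
    2 * ℓ ≤ Fintype.card V ∧
      ∀ s t : Fin ℓ → V, Function.Injective (Sum.elim s t) →
        ∃ P : ∀ i, G.Walk (s i) (t i),
          (∀ i, (P i).IsPath) ∧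
          (∀ i j, i ≠ j → ∀ v, v ∈ (P i).support → v ∉ (P j).support) ∧
          (∀ v, ∃ i, v ∈ (P i).support) := by
  have hst' : ∀ s t : Fin ℓ → V, Function.Injective (Sum.elim s t) → ∀ i, s i ≠ t i := by
    intro s t hst i h
    have := @hst (Sum.inl i) (Sum.inr i) (by simpa using h)
    simp at this
  refine ⟨?_, fun s t hst => ?_⟩
  · have h1 := hconn.1
    have h2 := le_max_right (k * ℓ) (10 * ℓ)
    omega
  · have : Nonempty (Fin ℓ) := ⟨⟨0, hℓ⟩⟩
    -- For `k < 4` the bound `10ℓ` takes over, since linking needs `4ℓ`-connectivity.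
    have hmax : max k 4 * ℓ ≤ max (k * ℓ) (10 * ℓ) := by
      rcases le_total k 4 with h | h
      · rw [max_eq_right h]
        exact le_max_of_le_right (by omega)
      · rw [max_eq_left h]
        exact le_max_left _ _
    obtain ⟨P, hP, -⟩ := exists_linkage (le_max_right k 4)
      (fun S hS => (hα S hS).trans_le (le_max_left k 4)) hst Finset.univ ∅ (by simp)
      (hconn.connectedAbove (by simpa using hmax))
    obtain ⟨P', hP', hcov⟩ := exists_spanning (by omega) hα
      (hconn.connectedAbove (by rw [Fintype.card_fin]; exact le_max_left _ _)) (hst' s t hst) _ P hP rfl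
    choose W hW hWs using fun i => (hP'.1 i (Finset.mem_univ i)).exists_walk
    refine ⟨W, hW, fun i j hij v hv hv' => ?_, fun v => ?_⟩
    · rw [hWs] at hv hv'
      exact hP'.2 i (by simp) j (by simp) hij v hv hv'
    · obtain ⟨i, hi⟩ := hcov v
      exact ⟨i, by rwa [hWs]⟩
end
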